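/- arXiv:0811.4691 — 2 statements merged into one kernel-verified Lean document; each statement's English description precedes it below -/
import Mathlib

section
/- Let k be a field and R a k-subalgebra of an affine domain T over k. Then R is a Jaffard domain: for every natural number n ≥ 1, the Krull dimension of the polynomial ring R[X₁, …, Xₙ] equals n plus the Krull dimension of R. -/
/-!
Let `k` be a field, and consider the residue rings `A ⧸ p` of a `k`-algebra `A`. A proper inclusion
of primes lowers the transcendence degree of the residue ring: a nonzero element of the kernel of
`A ⧸ p → A ⧸ q` is algebraically independent of any lift of an independent family of `A ⧸ q`.
Hence `dim A ≤ sup trdeg (A ⧸ p)` for every `k`-algebra `A`. For `A = R[X₁, …, Xₙ]`, the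
residue ring of `A` at a prime `q` has transcendence degree at most `n + trdeg (R ⧸ (q ∩ R))`,
so it remains to bound `trdeg (R ⧸ p)` by `dim R` when `R` embeds in an affine algebra `T`.

It suffices to do this for a minimal prime `p`, and minimal primes are contracted from `T`. Among
the primes of `T` over `p` choose a maximal one, `P`. The fibre of `R → T ⧸ P` over `p` is then the
single point `⊥`, so by Zariski's main theorem some localization `S = (T ⧸ P)[1/r]`, `r ≠ 0`, is
quasi-finite over `R`. As `S` is an affine domain containing `R ⧸ p`,
`trdeg (R ⧸ p) ≤ trdeg S = dim S ≤ dim R`.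
-/

open Algebra

universe u

section TranscendenceDegree

theorem algebraicIndependent_option_of_map_eq_zero {ι k A B : Type*} [CommRing k] [CommRing A]
    [IsDomain A] [CommRing B] [Algebra k A] [Algebra k B] (f : A →ₐ[k] B) {a : A} {x : ι → A}
    (hx : AlgebraicIndependent k (f ∘ x)) (ha : a ≠ 0) (hfa : f a = 0) :
    AlgebraicIndependent k fun o : Option ι ↦ o.elim a x := by
  rw [AlgebraicIndependent.option_iff]
  refine ⟨.of_comp f hx, fun halg ↦ ?_⟩
  -- If `a` were algebraic over `k[x]`, then `ker f` would meet `k[x]` nontrivially.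
  refine Ideal.comap_ne_bot_of_algebraic_mem ha (RingHom.mem_ker.mpr hfa : a ∈ RingHom.ker f) halg
    (eq_bot_iff.mpr ?_)
  rintro ⟨c, hc⟩ hfc
  rw [Algebra.adjoin_range_eq_range_aeval] at hc
  obtain ⟨p, rfl⟩ := hc
  have hp : MvPolynomial.aeval (f ∘ x) p = 0 :=
    (MvPolynomial.comp_aeval_apply x f p).symm.trans hfc
  exact Subtype.ext (by simp [hx.eq_zero_of_aeval_eq_zero p hp])

theorem trdeg_add_one_le_of_surjective_of_not_injective {k : Type*} {A B : Type u} [CommRing k]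
    [CommRing A] [IsDomain A] [CommRing B] [Algebra k A] [Algebra k B] [FaithfulSMul k B]
    {f : A →ₐ[k] B} (hsurj : Function.Surjective f) (hinj : ¬ Function.Injective f) :
    trdeg k B + 1 ≤ trdeg k A := by
  obtain ⟨a, hfa, ha⟩ : ∃ a, f a = 0 ∧ a ≠ 0 := by
    simpa [injective_iff_map_eq_zero] using hinj
  have : Nontrivial k := (algebraMap k A).domain_nontrivial
  rw [trdeg, Cardinal.ciSup_add _ Cardinal.bddAbove_of_small]
  refine ciSup_le' fun s ↦ ?_
  have hs : AlgebraicIndependent k (f ∘ fun b : s.1 ↦ Function.surjInv hsurj b) := by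
    simp only [Function.comp_def, Function.surjInv_eq]
    exact s.2
  simpa using (algebraicIndependent_option_of_map_eq_zero f hs ha hfa).cardinalMk_le_trdeg

theorem trdeg_quotient_add_one_le_of_lt (k : Type*) {R : Type*} [Field k] [CommRing R]
    [Algebra k R] {p q : Ideal R} [p.IsPrime] [q.IsPrime] (hpq : p < q) :
    trdeg k (R ⧸ q) + 1 ≤ trdeg k (R ⧸ p) := by
  refine trdeg_add_one_le_of_surjective_of_not_injective (f := Ideal.Quotient.factorₐ k hpq.le)
    (Ideal.Quotient.factor_surjective hpq.le) fun hinj ↦ hpq.not_ge fun x hx ↦ ?_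
  rw [← Ideal.Quotient.eq_zero_iff_mem] at hx ⊢
  exact hinj (hx.trans (map_zero _).symm)

theorem natCast_add_trdeg_quotient_le_trdeg_quotient_head (k : Type*) {R : Type*} [Field k]
    [CommRing R] [Algebra k R] (l : LTSeries (PrimeSpectrum R)) (i : Fin (l.length + 1)) :
    (i : ℕ) + trdeg k (R ⧸ (l i).asIdeal) ≤ trdeg k (R ⧸ l.head.asIdeal) := by
  induction i using Fin.induction with
  | zero => exact (zero_add _).le
  | succ i ih =>
    calc (i.succ : ℕ) + trdeg k (R ⧸ (l i.succ).asIdeal)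
      _ = (i.castSucc : ℕ) + (trdeg k (R ⧸ (l i.succ).asIdeal) + 1) := by
        rw [Fin.val_succ, Fin.val_castSucc]
        push_cast
        ring
      _ ≤ (i.castSucc : ℕ) + trdeg k (R ⧸ (l i.castSucc).asIdeal) := by
        gcongr
        exact trdeg_quotient_add_one_le_of_lt k (l.step i)
      _ ≤ trdeg k (R ⧸ l.head.asIdeal) := ih

theorem ringKrullDim_le_iSup_toENat_trdeg_quotient (k R : Type*) [Field k] [CommRing R]
    [Algebra k R] :
    ringKrullDim R ≤ ⨆ p : PrimeSpectrum R, ((trdeg k (R ⧸ p.asIdeal)).toENat : WithBot ℕ∞) := by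
  refine iSup_le fun l ↦ le_iSup_of_le l.head ?_
  have hlength : (l.length : Cardinal) ≤ trdeg k (R ⧸ l.head.asIdeal) :=
    (self_le_add_right _ _).trans
      (natCast_add_trdeg_quotient_le_trdeg_quotient_head k l (Fin.last _))
  exact WithBot.coe_le_coe.mpr (Cardinal.natCast_le_toENat.mpr hlength)

theorem toENat_trdeg_mvPolynomial_quotient_le (k : Type*) {R σ : Type*} [Field k] [CommRing R]
    [Algebra k R] (q : Ideal (MvPolynomial σ R)) [q.IsPrime] :
    (trdeg k (MvPolynomial σ R ⧸ q)).toENat ≤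
      ENat.card σ + (trdeg k (R ⧸ q.under R)).toENat := by
  have hgen : Function.Surjective
      (MvPolynomial.aeval (R := R ⧸ q.under R) fun i ↦ Ideal.Quotient.mk q (.X i)) := by
    refine Ideal.Quotient.mk_surjective.forall.mpr fun p ↦ ⟨p.map (Ideal.Quotient.mk _), ?_⟩
    induction p using MvPolynomial.induction_on with
    | C r => simp
    | add p₁ p₂ h₁ h₂ => simp [h₁, h₂]
    | mul_X p i h => simp [h]
  have hrel : (trdeg (R ⧸ q.under R) (MvPolynomial σ R ⧸ q)).toENat ≤ ENat.card σ := by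
    have h := lift_trdeg_le_of_surjective _ hgen
    rw [MvPolynomial.trdeg_of_isDomain] at h
    simpa [ENat.card] using OrderHomClass.mono Cardinal.toENat h
  have hadd : (trdeg k (R ⧸ q.under R)).toENat +
      (trdeg (R ⧸ q.under R) (MvPolynomial σ R ⧸ q)).toENat =
        (trdeg k (MvPolynomial σ R ⧸ q)).toENat := by
    simpa using congr(Cardinal.toENat
      $(lift_trdeg_add_eq k (R ⧸ q.under R) (MvPolynomial σ R ⧸ q)))
  rw [← hadd, add_comm]
  gcongr

end TranscendenceDegree

section KrullDimension

variable (R S : Type*) [CommRing R] [CommRing S] [Algebra R S]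

theorem ringKrullDim_le_of_quasiFinite [Algebra.QuasiFinite R S] :
    ringKrullDim S ≤ ringKrullDim R := by
  refine Order.krullDim_le_of_strictMono (PrimeSpectrum.comap (algebraMap R S)) fun P Q hPQ ↦ ?_
  refine lt_of_le_of_ne (Ideal.comap_mono hPQ.le) fun h ↦ hPQ.ne (PrimeSpectrum.ext ?_)
  exact Algebra.QuasiFinite.eq_of_le_of_under_eq (R := R) _ _ hPQ.le congr(($h).asIdeal)

theorem ringKrullDim_le_of_isIntegral_of_faithfulSMul [Algebra.IsIntegral R S] [FaithfulSMul R S] :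
    ringKrullDim R ≤ ringKrullDim S := by
  refine iSup_le fun l ↦ ?_
  obtain ⟨P, hP⟩ := Algebra.IsIntegral.comap_surjective R S l.head
  have : P.asIdeal.LiesOver l.head.asIdeal := ⟨congr(($hP).asIdeal).symm⟩
  obtain ⟨L, hL, -⟩ := Ideal.exists_ltSeries_of_hasGoingUp l P.asIdeal
  exact hL ▸ Order.LTSeries.length_le_krullDim L

theorem toENat_trdeg_le_ringKrullDim_of_finiteType (k A : Type*) [Field k] [CommRing A]
    [IsDomain A] [Algebra k A] [Algebra.FiniteType k A] :
    (trdeg k A).toENat ≤ ringKrullDim A := by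
  obtain ⟨s, g, hinj, hint⟩ := exists_integral_inj_algHom_of_fg k A
  algebraize [g.toRingHom]
  have : IsScalarTower k (MvPolynomial (Fin s) k) A :=
    .of_algebraMap_eq fun x ↦ (g.commutes x).symm
  have : FaithfulSMul (MvPolynomial (Fin s) k) A :=
    (faithfulSMul_iff_algebraMap_injective _ _).mpr hinj
  have htrdeg : (trdeg k A).toENat = s := by
    have h := lift_trdeg_add_eq k (MvPolynomial (Fin s) k) A
    rw [trdeg_eq_zero (R := MvPolynomial (Fin s) k), MvPolynomial.trdeg_of_isDomain] at h
    simpa using congr(Cardinal.toENat $h.symm)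
  calc ((trdeg k A).toENat : WithBot ℕ∞) = s := by rw [htrdeg]; rfl
    _ = ringKrullDim (MvPolynomial (Fin s) k) := by simp
    _ ≤ ringKrullDim A := ringKrullDim_le_of_isIntegral_of_faithfulSMul _ A

end KrullDimension

section GenericQuasiFiniteness

variable {R T : Type*} [CommRing R] [CommRing T] [Algebra R T]

theorem exists_notMem_quasiFinite_away [Algebra.FiniteType R T] (P : Ideal T) [P.IsPrime]
    [Algebra.QuasiFiniteAt R P] : ∃ r ∉ P, Algebra.QuasiFinite R (Localization.Away r) := by
  obtain ⟨T', hfg, r, hrP, hbij⟩ :=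
    Algebra.QuasiFiniteAt.exists_fg_and_exists_notMem_and_awayMap_bijective (R := R) P
  have : Module.Finite R T' := ⟨(Submodule.fg_top _).mpr hfg⟩
  have : Algebra.QuasiFinite R (Localization.Away r) := .trans _ T' _
  exact ⟨r, hrP, .of_surjective_algHom (Localization.awayMapₐ T'.val r) hbij.2⟩

theorem eq_bot_of_maximal_primesOver {p : Ideal R} {P : Ideal T}
    (hP : Maximal (· ∈ p.primesOver T) P) {Q : Ideal (T ⧸ P)} [Q.IsPrime] (hQ : Q.under R = p) :
    Q = ⊥ := by
  have hbot : (⊥ : Ideal (T ⧸ P)).under T = P := Ideal.mk_ker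
  have hle : P ≤ Q.under T := hbot.ge.trans (Ideal.comap_mono bot_le)
  have hmem : Q.under T ∈ p.primesOver T := ⟨inferInstance, ⟨by rw [Ideal.under_under, hQ]⟩⟩
  exact Ideal.comap_injective_of_surjective _ Ideal.Quotient.mk_surjective
    ((hP.eq_of_le hmem hle).symm.trans hbot.symm)

theorem quasiFiniteAt_bot_of_maximal_primesOver [Algebra.FiniteType R T] {p : Ideal R}
    {P : Ideal T} [P.IsPrime] (hP : Maximal (· ∈ p.primesOver T) P) :
    Algebra.QuasiFiniteAt R (⊥ : Ideal (T ⧸ P)) := by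
  have hunder : (⊥ : Ideal (T ⧸ P)).under R = p := by
    rw [← Ideal.under_under (B := T), Ideal.under_def T, ← RingHom.ker_eq_comap_bot,
      Ideal.Quotient.algebraMap_eq, Ideal.mk_ker, ← hP.prop.2.over]
  refine Algebra.QuasiFiniteAt.of_isOpen_singleton_fiber (R := R) ⟨⊥, Ideal.isPrime_bot⟩ ?_
  have hfiber (Q : PrimeSpectrum.comap (algebraMap R (T ⧸ P)) ⁻¹'
      {PrimeSpectrum.comap (algebraMap R (T ⧸ P)) ⟨⊥, Ideal.isPrime_bot⟩}) :
      Q.1.asIdeal = ⊥ :=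
    eq_bot_of_maximal_primesOver hP (congr(($(Q.2)).asIdeal).trans hunder)
  have := Subsingleton.intro fun Q₁ Q₂ ↦
    Subtype.ext (PrimeSpectrum.ext ((hfiber Q₁).trans (hfiber Q₂).symm))
  exact isOpen_discrete _

theorem exists_mem_primesOver_quasiFinite_away [Algebra.FiniteType R T] [IsNoetherianRing T]
    {p : Ideal R} (hp : (p.primesOver T).Nonempty) :
    ∃ P ∈ p.primesOver T, ∃ r : T ⧸ P, r ≠ 0 ∧ Algebra.QuasiFinite R (Localization.Away r) := by
  obtain ⟨P, hP⟩ := WellFoundedGT.exists_maximal inferInstance _ hp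
  have : P.IsPrime := hP.prop.1
  have := quasiFiniteAt_bot_of_maximal_primesOver hP
  exact ⟨P, hP.prop, exists_notMem_quasiFinite_away (⊥ : Ideal (T ⧸ P))⟩

end GenericQuasiFiniteness

theorem toENat_trdeg_quotient_le_ringKrullDim (k : Type*) {R : Type*} (T : Type*) [Field k]
    [CommRing R] [CommRing T] [Algebra k R] [Algebra k T] [Algebra R T] [IsScalarTower k R T]
    [FaithfulSMul R T] [Algebra.FiniteType k T] (p : Ideal R) [p.IsPrime] :
    (trdeg k (R ⧸ p)).toENat ≤ ringKrullDim R := by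
  have : Algebra.FiniteType R T := .of_restrictScalars_finiteType k R T
  have : IsNoetherianRing T := Algebra.FiniteType.isNoetherianRing k T
  obtain ⟨q, hq, hqp⟩ := Ideal.exists_minimalPrimes_le (bot_le : ⊥ ≤ p)
  obtain ⟨Q, hQ, hQq⟩ := Ideal.exists_comap_eq_of_mem_minimalPrimes_of_injective
    (FaithfulSMul.algebraMap_injective R T) q hq
  obtain ⟨P, ⟨_, _⟩, r, hr, _⟩ :=
    exists_mem_primesOver_quasiFinite_away (T := T) (p := q) ⟨Q, hQ, ⟨hQq.symm⟩⟩
  have hpowers := powers_le_nonZeroDivisors_of_noZeroDivisors hr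
  have : IsDomain (Localization.Away r) := IsLocalization.isDomain_localization hpowers
  have hinj : Function.Injective (algebraMap (R ⧸ q) (Localization.Away r)) := by
    rw [IsScalarTower.algebraMap_eq _ (T ⧸ P)]
    exact (IsLocalization.injective _ hpowers).comp
      (FaithfulSMul.algebraMap_injective (R ⧸ q) (T ⧸ P))
  have hpq : trdeg k (R ⧸ p) ≤ trdeg k (R ⧸ q) :=
    trdeg_le_of_surjective (Ideal.Quotient.factorₐ k hqp) (Ideal.Quotient.factor_surjective hqp)
  have hqr : (trdeg k (R ⧸ q)).toENat ≤ (trdeg k (Localization.Away r)).toENat := by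
    simpa using OrderHomClass.mono Cardinal.toENat
      (lift_trdeg_le_of_injective (IsScalarTower.toAlgHom k (R ⧸ q) (Localization.Away r)) hinj)
  calc ((trdeg k (R ⧸ p)).toENat : WithBot ℕ∞)
    _ ≤ (trdeg k (Localization.Away r)).toENat :=
      WithBot.coe_le_coe.mpr ((OrderHomClass.mono Cardinal.toENat hpq).trans hqr)
    _ ≤ ringKrullDim (Localization.Away r) := toENat_trdeg_le_ringKrullDim_of_finiteType k _
    _ ≤ ringKrullDim R := ringKrullDim_le_of_quasiFinite R _

theorem jaffard_of_subalgebra_of_affine_general {k T σ : Type*} [Field k] [CommRing T]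
    [Algebra k T] [Algebra.FiniteType k T] [Finite σ] (R : Subalgebra k T) :
    ringKrullDim (MvPolynomial σ R) = (Nat.card σ : WithBot ℕ∞) + ringKrullDim R := by
  refine le_antisymm ?_ ((add_comm _ _).trans_le
    (ringKrullDim_add_natCard_le_ringKrullDim_mvPolynomial (R := R) σ))
  refine (ringKrullDim_le_iSup_toENat_trdeg_quotient k _).trans (iSup_le fun q ↦ ?_)
  calc ((trdeg k (MvPolynomial σ R ⧸ q.asIdeal)).toENat : WithBot ℕ∞)
    _ ≤ ENat.card σ + (trdeg k (R ⧸ q.asIdeal.under R)).toENat := by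
      exact_mod_cast toENat_trdeg_mvPolynomial_quotient_le k q.asIdeal
    _ = Nat.card σ + (trdeg k (R ⧸ q.asIdeal.under R)).toENat := by
      rw [ENat.card_eq_coe_natCard]
      rfl
    _ ≤ Nat.card σ + ringKrullDim R := by
      gcongr
      exact toENat_trdeg_quotient_le_ringKrullDim k T _

/-- Let `k` be a field and `R` a `k`-subalgebra of an affine domain `T` over `k`.  Then
`R` is a Jaffard domain: for every `n ≥ 1`, the Krull dimension of the polynomial ring
`R[X₁, …, Xₙ]` equals `n` plus the Krull dimension of `R`. -/
theorem jaffard_of_subalgebra_of_affine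
    {k T : Type*} [Field k] [CommRing T] [IsDomain T] [Algebra k T]
    [Algebra.FiniteType k T] (R : Subalgebra k T) :
    ∀ n : ℕ, 1 ≤ n →
      ringKrullDim (MvPolynomial (Fin n) R) = (n : WithBot ℕ∞) + ringKrullDim R := by
  intro n _
  simpa using jaffard_of_subalgebra_of_affine_general (σ := Fin n) R
end

section
/- Let k be a field, T an affine domain over k, and R a k-subalgebra of T. Then for every prime ideal P of T, the Krull dimension of R equals the height of the prime ideal P ∩ R of R plus the transcendence degree over k of the fraction field of the quotient domain R/(P ∩ R). -/
/-- The transcendence degree of a commutative `k`-algebra `A`: the supremum of the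
cardinalities of the subsets of `A` that are algebraically independent over `k`. -/
noncomputable def trdeg (k A : Type*) [CommRing k] [CommRing A] [Algebra k A] : Cardinal :=
  ⨆ s : { s : Set A // AlgebraicIndependent k ((↑) : s → A) }, Cardinal.mk s.1

/-- The `k`-algebra structure on the fraction field of a `k`-algebra `S`, obtained by
composing `k → S → Frac(S)`. -/
noncomputable def fractionRingAlgebra (k S : Type*) [CommRing k] [CommRing S] [Algebra k S] :
    Algebra k (FractionRing S) :=
  ((algebraMap S (FractionRing S)).comp (algebraMap k S)).toAlgebra

/-- `td(S)`: the transcendence degree over `k` of the fraction field of `S`. -/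
noncomputable def fractionFieldTrdeg (k S : Type*) [CommRing k] [CommRing S] [Algebra k S] :
    Cardinal :=
  @trdeg k (FractionRing S) _ _ (fractionRingAlgebra k S)

/-- A cardinal viewed in `WithBot (WithTop ℕ)` (the codomain of `ringKrullDim`),
infinite cardinals being sent to `⊤`. -/
noncomputable def cardinalToKrullDim (c : Cardinal) : WithBot ℕ∞ :=
  ((Cardinal.toENat c : ℕ∞) : WithBot ℕ∞)

/-!
Replace `P` by a prime of `T` over the same prime of `R` such that `T ⧸ P` is algebraic over
`R ⧸ P ∩ R`, and climb from `⊥` to `P` through primes `Q` of `T`, in steps of relative height one.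
Prime avoidance lets each step but the last avoid the closed locus where the transcendence degree
of the fibres of `R → T` jumps; the last step is controlled by the algebraicity of `T ⧸ P`. So
`td (R ⧸ Q ∩ R)` drops by at most one at each step, and it does not change when `Q ∩ R` stays the
same. Hence `td R ≤ ht (P ∩ R) + td (R ⧸ P ∩ R)`. The opposite inequality holds because the
transcendence degree of the quotients of `R` drops strictly along any chain of primes. A maximal
`P` then gives `dim R = td R`.
-/

open Algebra Cardinal

universe u v w

section Trdeg

variable {k : Type u} {R T : Type v} [CommRing k] [CommRing R] [CommRing T] [Algebra k R]
  [Algebra k T]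

theorem trdeg_quotient_le (I : Ideal R) : Algebra.trdeg k (R ⧸ I) ≤ Algebra.trdeg k R :=
  trdeg_le_of_surjective (Ideal.Quotient.mkₐ k I) (Ideal.Quotient.mkₐ_surjective k I)

theorem trdeg_quotient_comap {f : R →ₐ[k] T} (hf : Function.Surjective f) (J : Ideal T) :
    Algebra.trdeg k (R ⧸ J.comap f) = Algebra.trdeg k (T ⧸ J) := by
  let g : R →ₐ[k] T ⧸ J := (Ideal.Quotient.mkₐ k J).comp f
  have hg : Function.Surjective g := (Ideal.Quotient.mkₐ_surjective k J).comp hf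
  have hker : RingHom.ker g = J.comap f := by
    ext
    exact Ideal.Quotient.eq_zero_iff_mem
  rw [← hker, (Ideal.quotientKerAlgEquivOfSurjective hg).trdeg_eq]

theorem trdeg_lt_aleph0_of_faithfulSMul [IsDomain k] [Algebra R T] [IsScalarTower k R T]
    [FaithfulSMul R T] [Algebra.FiniteType k T] : Algebra.trdeg k R < ℵ₀ :=
  (trdeg_le_of_injective (IsScalarTower.toAlgHom k R T)
    (FaithfulSMul.algebraMap_injective R T)).trans_lt trdeg_lt_aleph0_of_finiteType

theorem injOn_adjoin_range_of_algebraicIndependent_comp {ι : Type*} {x : ι → R} {f : R →ₐ[k] T}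
    (hfx : AlgebraicIndependent k (f ∘ x)) : Set.InjOn f (adjoin k (Set.range x)) := by
  have haeval : Function.Injective (f ∘ MvPolynomial.aeval (R := k) x) := by
    rw [← AlgHom.coe_comp, MvPolynomial.comp_aeval]
    exact hfx
  rw [adjoin_range_eq_range_aeval k x]
  rintro _ ⟨p, rfl⟩ _ ⟨q, rfl⟩ hpq
  rw [haeval hpq]

variable [Nontrivial k]

theorem lift_trdeg_eq_of_isAlgebraic {S : Type w} [CommRing S] [Algebra k S] [Algebra R S]
    [IsScalarTower k R S] [Nontrivial R] [NoZeroDivisors S] [FaithfulSMul k R] [FaithfulSMul R S]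
    [Algebra.IsAlgebraic R S] :
    lift.{v} (Algebra.trdeg k S) = lift.{w} (Algebra.trdeg k R) := by
  rw [← lift_trdeg_add_eq k R (A := S), trdeg_eq_zero (R := R), lift_zero, add_zero]

theorem trdeg_eq_of_isAlgebraic [Algebra R T] [IsScalarTower k R T] [Nontrivial R]
    [NoZeroDivisors T] [FaithfulSMul k R] [FaithfulSMul R T] [Algebra.IsAlgebraic R T] :
    Algebra.trdeg k T = Algebra.trdeg k R := by
  simpa only [lift_id] using lift_trdeg_eq_of_isAlgebraic (k := k) (R := R) (S := T)

theorem injective_of_algebraicIndependent_comp [IsDomain R] {ι : Type*} {x : ι → R} {f : R →ₐ[k] T}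
    (hx : IsTranscendenceBasis k x) (hfx : AlgebraicIndependent k (f ∘ x)) :
    Function.Injective f := by
  have := hx.isAlgebraic
  by_contra hf
  obtain ⟨a, ha, ha0⟩ := Submodule.exists_mem_ne_zero_of_ne_bot
    (mt (RingHom.injective_iff_ker_eq_bot f).2 hf)
  refine Ideal.comap_ne_bot_of_algebraic_mem ha0 ha
    (Algebra.IsAlgebraic.isAlgebraic (R := adjoin k (Set.range x)) a) (eq_bot_iff.2 fun c hc => ?_)
  exact Subtype.ext (injOn_adjoin_range_of_algebraicIndependent_comp hfx c.2 (zero_mem _)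
    ((RingHom.mem_ker.1 hc).trans (map_zero f).symm))

theorem trdeg_lt_of_surjective_of_not_injective [IsDomain R] [IsDomain T] [FaithfulSMul k T]
    (hR : Algebra.trdeg k R < ℵ₀) {f : R →ₐ[k] T} (hf : Function.Surjective f)
    (hf' : ¬ Function.Injective f) : Algebra.trdeg k T < Algebra.trdeg k R := by
  refine (trdeg_le_of_surjective f hf).lt_of_ne fun heq => hf' ?_
  obtain ⟨ι, x, hx⟩ := exists_isTranscendenceBasis' k T
  choose y hy using fun i => hf (x i)
  obtain rfl : f ∘ y = x := funext hy
  have hybasis : IsTranscendenceBasis k y := (hx.1.of_comp f).isTranscendenceBasis_of_trdeg_le hR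
    (by rw [hx.cardinalMk_eq_trdeg, heq])
  exact injective_of_algebraicIndependent_comp hybasis hx.1

end Trdeg

section Height

variable {k : Type u} {R : Type v} [Field k] [CommRing R] [Algebra k R]

theorem trdeg_quotient_lt_trdeg_quotient {p q : Ideal R} [p.IsPrime] [q.IsPrime]
    (hp : Algebra.trdeg k (R ⧸ p) < ℵ₀) (hpq : p < q) :
    Algebra.trdeg k (R ⧸ q) < Algebra.trdeg k (R ⧸ p) := by
  refine trdeg_lt_of_surjective_of_not_injective hp (f := Ideal.Quotient.factorₐ k hpq.le)
    (Ideal.Quotient.factor_surjective hpq.le) fun hinj => hpq.not_ge fun a ha => ?_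
  rw [← Ideal.Quotient.eq_zero_iff_mem] at ha ⊢
  exact hinj (ha.trans (map_zero _).symm)

theorem height_add_le_of_strictAnti {α : Type*} [Preorder α] {f : α → ℕ} (hf : StrictAnti f)
    {n : ℕ} (hn : ∀ a, f a ≤ n) (a : α) : Order.height a + f a ≤ n := by
  have hmono : StrictMono fun a => n - f a := fun a b hab => by
    have := hf hab
    have := hn a
    lia
  calc Order.height a + f a ≤ (n - f a : ℕ) + f a := by
        gcongr
        simpa using Order.height_le_height_apply_of_strictMono _ hmono a
    _ = n := by rw [← Nat.cast_add, Nat.sub_add_cancel (hn a)]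

theorem height_add_trdeg_quotient_le (hR : Algebra.trdeg k R < ℵ₀) (p : Ideal R) [hp : p.IsPrime] :
    p.height + toENat (Algebra.trdeg k (R ⧸ p)) ≤ toENat (Algebra.trdeg k R) := by
  have hlt (I : Ideal R) : Algebra.trdeg k (R ⧸ I) < ℵ₀ := (trdeg_quotient_le I).trans_lt hR
  have hanti : StrictAnti fun q : PrimeSpectrum R => toNat (Algebra.trdeg k (R ⧸ q.asIdeal)) :=
    fun q q' hqq' => toNat_lt_toNat (trdeg_quotient_lt_trdeg_quotient (hlt _) hqq') (hlt _)
  have hle (q : PrimeSpectrum R) :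
      toNat (Algebra.trdeg k (R ⧸ q.asIdeal)) ≤ toNat (Algebra.trdeg k R) :=
    toNat_le_toNat (trdeg_quotient_le _) hR
  have hcast {c : Cardinal} (hc : c < ℵ₀) : (toNat c : ℕ∞) = toENat c :=
    ENat.natCast_toNat (toENat_lt_top.2 hc).ne
  have := height_add_le_of_strictAnti hanti hle ⟨p, hp⟩
  rwa [← PrimeSpectrum.height_eq_orderHeight, hcast (hlt _), hcast hR] at this

end Height

section MvPolynomial

open MvPolynomial

theorem exists_degreeOf_ne_zero_of_prime {k σ : Type*} [Field k] {π : MvPolynomial σ k}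
    (hπ : Prime π) : ∃ i, π.degreeOf i ≠ 0 := by
  simp_rw [← mem_vars_iff_degreeOf_ne_zero]
  refine Finset.nonempty_iff_ne_empty.2 fun hvars => hπ.not_isUnit ?_
  have hconst := vars_eq_empty_iff_eq_C.1 hvars
  rw [hconst]
  refine (isUnit_iff_ne_zero.2 fun hcoeff => hπ.ne_zero ?_).map _
  rw [hconst, hcoeff, map_zero]

theorem degreeOf_rename_of_notMem_range {k σ τ : Type*} [CommSemiring k] {f : σ → τ} {i : τ}
    (hi : i ∉ Set.range f) (p : MvPolynomial σ k) : (rename f p).degreeOf i = 0 := by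
  classical
  by_contra hne
  obtain ⟨j, -, hj⟩ :=
    Finset.mem_image.1 (vars_rename f p (mem_vars_iff_degreeOf_ne_zero.2 hne))
  exact hi ⟨j, hj⟩

theorem algebraicIndependent_mk_X_of_degreeOf_ne_zero {k σ : Type*} [CommRing k] [IsDomain k]
    {π : MvPolynomial σ k} {i : σ} (hi : π.degreeOf i ≠ 0) :
    AlgebraicIndependent k fun j : {j // j ≠ i} =>
      Ideal.Quotient.mkₐ k (Ideal.span {π}) (X (R := k) j.1) := by
  refine algebraicIndependent_iff.2 fun p hp => ?_
  have hmem : rename Subtype.val p ∈ Ideal.span {π} := by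
    rw [← Ideal.Quotient.eq_zero_iff_mem, ← Ideal.Quotient.mkₐ_eq_mk k, ← hp, rename_eq_aeval,
      ← comp_aeval_apply]
    rfl
  obtain ⟨c, hc⟩ := Ideal.mem_span_singleton.1 hmem
  by_contra hp0
  have hπc : π * c ≠ 0 := by
    rw [← hc]
    exact (map_ne_zero_iff _ (rename_injective _ Subtype.val_injective)).2 hp0
  have hdeg := degreeOf_mul_eq (n := i) (left_ne_zero_of_mul hπc) (right_ne_zero_of_mul hπc)
  rw [← hc, degreeOf_rename_of_notMem_range (by simp)] at hdeg
  lia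

theorem mvPolynomial_trdeg_le_trdeg_quotient_span_add_one {k : Type u} {σ : Type v} [Field k]
    {π : MvPolynomial σ k} (hπ : Prime π) :
    Algebra.trdeg k (MvPolynomial σ k) ≤
      Algebra.trdeg k (MvPolynomial σ k ⧸ Ideal.span {π}) + 1 := by
  classical
  obtain ⟨i, hi⟩ := exists_degreeOf_ne_zero_of_prime hπ
  have : (Ideal.span {π}).IsPrime := (Ideal.span_singleton_prime hπ.ne_zero).2 hπ
  have hle := (algebraicIndependent_mk_X_of_degreeOf_ne_zero hi).lift_cardinalMk_le_trdeg
  rw [lift_id'.{v, max u v}, lift_umax.{v, u}] at hle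
  rw [trdeg_of_isDomain, ← mk_congr (Equiv.optionSubtypeNe i), mk_option, lift_add, lift_one]
  gcongr

theorem mvPolynomial_trdeg_le_trdeg_quotient_add_one {k : Type u} {σ : Type v} [Field k]
    {q : Ideal (MvPolynomial σ k)} [q.IsPrime] (hq : q.height ≤ 1) :
    Algebra.trdeg k (MvPolynomial σ k) ≤ Algebra.trdeg k (MvPolynomial σ k ⧸ q) + 1 := by
  obtain rfl | hq0 := eq_or_ne q ⊥
  · rw [(AlgEquiv.quotientBot k (MvPolynomial σ k)).trdeg_eq]
    exact self_le_add_right _ _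
  obtain ⟨π, hπq, hπ⟩ := Ideal.IsPrime.exists_mem_prime_of_ne_bot ‹_› hq0
  have hq1 : q.height = 1 :=
    hq.antisymm (Order.one_le_iff_ne_zero.2 (mt Ideal.height_eq_zero_iff_eq_bot.1 hq0))
  rw [Ideal.eq_span_singleton_of_height_eq_one hq1 hπq hπ]
  exact mvPolynomial_trdeg_le_trdeg_quotient_span_add_one hπ

end MvPolynomial

theorem trdeg_le_trdeg_quotient_add_one {k : Type u} {T : Type v} [Field k] [CommRing T]
    [IsDomain T] [Algebra k T] [Algebra.FiniteType k T] (Q : Ideal T) [Q.IsPrime]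
    (hQ : Q.height ≤ 1) :
    Algebra.trdeg k T ≤ Algebra.trdeg k (T ⧸ Q) + 1 := by
  obtain ⟨n, g, hg, hgint⟩ := exists_integral_inj_algHom_of_fg k T
  algebraize [g.toRingHom]
  let A := MvPolynomial (Fin n) k
  have : FaithfulSMul A T := (faithfulSMul_iff_algebraMap_injective _ _).2 hg
  have : IsNoetherianRing T := Algebra.FiniteType.isNoetherianRing k T
  have hgoingDown : (Q.under A).height ≤ Q.height :=
    le_self_add.trans (Ideal.height_eq_height_add_of_liesOver_of_hasGoingDown (Q.under A) Q).ge
  rw [← lift_le.{u}]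
  calc lift.{u} (Algebra.trdeg k T) = lift.{v} (Algebra.trdeg k A) := lift_trdeg_eq_of_isAlgebraic
    _ ≤ lift.{v} (Algebra.trdeg k (A ⧸ Q.under A)) + 1 := by
      rw [← lift_one.{u, v}, ← lift_add]
      exact lift_le.2 (mvPolynomial_trdeg_le_trdeg_quotient_add_one (hgoingDown.trans hQ))
    _ ≤ lift.{u} (Algebra.trdeg k (T ⧸ Q)) + 1 := by
      gcongr
      exact lift_trdeg_le_of_injective (IsScalarTower.toAlgHom k (A ⧸ Q.under A) (T ⧸ Q))
        (FaithfulSMul.algebraMap_injective _ _)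
    _ = lift.{u} (Algebra.trdeg k (T ⧸ Q) + 1) := by simp

theorem map_mem_adjoin_image {R R' T T' : Type*} [CommSemiring R] [CommSemiring R'] [Semiring T]
    [Semiring T'] [Algebra R R'] [Algebra R T] [Algebra R T'] [Algebra R' T']
    [IsScalarTower R R' T'] (φ : T →ₐ[R] T') {s : Set T} {x : T} (hx : x ∈ adjoin R s) :
    φ x ∈ adjoin R' (φ '' s) :=
  adjoin_le (S := ((adjoin R' (φ '' s)).restrictScalars R).comap φ)
    (fun _ hy => subset_adjoin (Set.mem_image_of_mem φ hy)) hx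

theorem isAlgebraic_adjoin_image {R R' T T' : Type*} [CommRing R] [CommRing R'] [CommRing T]
    [CommRing T'] [Algebra R R'] [Algebra R T] [Algebra R T'] [Algebra R' T']
    [IsScalarTower R R' T'] (φ : T →ₐ[R] T') {s : Set T} {x : T}
    {p : Polynomial (adjoin R s)} (hp : Polynomial.aeval x p = 0) (hlc : φ p.leadingCoeff ≠ 0) :
    IsAlgebraic (adjoin R' (φ '' s)) (φ x) := by
  let φ' : adjoin R s →+* adjoin R' (φ '' s) :=
    ((φ : T →+* T').comp (algebraMap _ T)).codRestrict _ fun y => map_mem_adjoin_image φ y.2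
  refine ⟨p.map φ', fun hzero => hlc ?_, ?_⟩
  · have hcoeff := congr(Polynomial.coeff $hzero p.natDegree)
    rw [Polynomial.coeff_map] at hcoeff
    exact congr(Subtype.val $hcoeff)
  · exact (Polynomial.map_aeval_eq_aeval_map (φ := φ') (ψ := (φ : T →+* T')) rfl p x).symm.trans
      (by rw [hp, map_zero])

theorem exists_forall_trdeg_quotient_le {R T : Type*} [CommRing R] [CommRing T] [IsDomain T]
    [Algebra R T] [FaithfulSMul R T] [Algebra.FiniteType R T] :
    ∃ f : T, f ≠ 0 ∧ ∀ Q : Ideal T, Q.IsPrime → f ∉ Q →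
      Algebra.trdeg (R ⧸ Q.under R) (T ⧸ Q) ≤ Algebra.trdeg R T := by
  have : Nontrivial R := (algebraMap R T).domain_nontrivial
  obtain ⟨S, hS⟩ := Algebra.FiniteType.out (R := R) (A := T)
  have hmem (x : T) : x ∈ adjoin R (S : Set T) := hS ▸ mem_top
  have : Algebra.IsAlgebraic (adjoin R (S : Set T)) T :=
    ⟨fun x => isAlgebraic_algebraMap (⟨x, hmem x⟩ : adjoin R (S : Set T))⟩
  obtain ⟨s, -, hs⟩ := exists_isTranscendenceBasis_subset (R := R) (S : Set T)
  have halg := hs.isAlgebraic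
  rw [Subtype.range_coe] at halg
  choose p hp0 hp using halg.isAlgebraic
  refine ⟨∏ x ∈ S, ((p x).leadingCoeff : T), ?_, fun Q hQ hf => ?_⟩
  · exact Finset.prod_ne_zero_iff.2 fun x _ h =>
      hp0 x (Polynomial.leadingCoeff_eq_zero.1 (Subtype.ext h))
  let φ := Ideal.Quotient.mkₐ R Q
  have hlc (x : T) (hx : x ∈ S) : φ (p x).leadingCoeff ≠ 0 := fun h =>
    hf (Q.mem_of_dvd (Finset.dvd_prod_of_mem (fun x => ((p x).leadingCoeff : T)) hx)
      (Ideal.Quotient.eq_zero_iff_mem.1 h))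
  have hgen (y : T ⧸ Q) : IsAlgebraic (adjoin (R ⧸ Q.under R) (φ '' S)) y := by
    obtain ⟨x, rfl⟩ := Ideal.Quotient.mkₐ_surjective R Q y
    exact isAlgebraic_algebraMap
      (⟨φ x, map_mem_adjoin_image φ (hmem x)⟩ : adjoin (R ⧸ Q.under R) (φ '' S))
  have : Algebra.IsAlgebraic (adjoin (R ⧸ Q.under R) (φ '' s)) (T ⧸ Q) := by
    refine ⟨fun y => (hgen y).adjoin_of_forall_isAlgebraic ?_⟩
    rintro _ ⟨⟨x, hx, rfl⟩, -⟩
    exact isAlgebraic_adjoin_image φ (hp x) (hlc x hx)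
  calc Algebra.trdeg (R ⧸ Q.under R) (T ⧸ Q) ≤ #(φ '' s) :=
        Algebra.IsAlgebraic.trdeg_le_cardinalMk _ _
    _ ≤ #s := mk_image_le
    _ = Algebra.trdeg R T := hs.cardinalMk_eq_trdeg

theorem under_ker_of_residueField {R T F : Type*} [CommRing R] [CommRing T] [CommRing F]
    [Nontrivial F] [Algebra R T] [Algebra R F] (p : Ideal R) [p.IsPrime] [Algebra p.ResidueField F]
    [IsScalarTower R p.ResidueField F] (φ : T →ₐ[R] F) : (RingHom.ker φ).under R = p := by
  ext r
  rw [Ideal.mem_comap, RingHom.mem_ker, AlgHom.commutes,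
    IsScalarTower.algebraMap_apply R p.ResidueField F, map_eq_zero,
    Ideal.algebraMap_residueField_eq_zero]

theorem isAlgebraic_quotient_ker_of_residueField {R T F : Type*} [CommRing R] [CommRing T]
    [Field F] [Algebra R T] [Algebra R F] (p : Ideal R) [p.IsPrime] [Algebra p.ResidueField F]
    [IsScalarTower R p.ResidueField F] [Algebra.IsAlgebraic p.ResidueField F] (φ : T →ₐ[R] F) :
    Algebra.IsAlgebraic (R ⧸ (RingHom.ker φ).under R) (T ⧸ RingHom.ker φ) := by
  let κ := p.ResidueField
  let : Algebra (R ⧸ p) F := ((algebraMap κ F).comp (algebraMap (R ⧸ p) κ)).toAlgebra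
  have : IsScalarTower (R ⧸ p) κ F := .of_algebraMap_eq' rfl
  have : Algebra.IsAlgebraic (R ⧸ p) κ := IsLocalization.isAlgebraic _ (nonZeroDivisors (R ⧸ p))
  have : Algebra.IsAlgebraic (R ⧸ p) F := Algebra.IsAlgebraic.trans _ κ _
  refine Algebra.IsAlgebraic.of_ringHom_of_comp_eq
    (Ideal.quotEquivOfEq (under_ker_of_residueField p φ)) (RingHom.kerLift φ.toRingHom)
    (RingEquiv.surjective _) (RingHom.kerLift_injective _) (Ideal.Quotient.ringHom_ext ?_)
  ext r
  exact (IsScalarTower.algebraMap_apply R κ F r).symm.trans (φ.commutes r).symm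

open TensorProduct in
theorem exists_isPrime_isAlgebraic_quotient {R T : Type*} [CommRing R] [CommRing T] [Algebra R T]
    [Algebra.FiniteType R T] (P : Ideal T) [P.IsPrime] :
    ∃ P' : Ideal T, P'.IsPrime ∧ P'.under R = P.under R ∧
      Algebra.IsAlgebraic (R ⧸ P'.under R) (T ⧸ P') := by
  let p := P.under R
  let κ := p.ResidueField
  have : Nontrivial (κ ⊗[R] T) :=
    (PrimeSpectrum.nontrivial_iff_mem_rangeComap ⟨p, inferInstance⟩).2 ⟨⟨P, inferInstance⟩, rfl⟩
  obtain ⟨m, hm⟩ := Ideal.exists_maximal (κ ⊗[R] T)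
  let F := (κ ⊗[R] T) ⧸ m
  let : Field F := Ideal.Quotient.field m
  have : Module.Finite κ F := finite_of_finite_type_of_isJacobsonRing _ _
  let φ : T →ₐ[R] F := (Ideal.Quotient.mkₐ R m).comp Algebra.TensorProduct.includeRight
  exact ⟨RingHom.ker φ, RingHom.ker_isPrime _, under_ker_of_residueField p φ,
    isAlgebraic_quotient_ker_of_residueField p φ⟩

theorem exists_le_height_le_one_notMem {T : Type*} [CommRing T] [IsDomain T] [IsNoetherianRing T]
    {P : Ideal T} [P.IsPrime] (hP : 1 < P.height) {f : T} (hf : f ≠ 0) :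
    ∃ Q ≤ P, Q.IsPrime ∧ Q ≠ ⊥ ∧ Q.height ≤ 1 ∧ f ∉ Q := by
  let primes := insert ⊥ (Ideal.span {f}).minimalPrimes
  have hfin : primes.Finite := (Ideal.finite_minimalPrimes_of_isNoetherianRing T _).insert ⊥
  have hprime (q) (hq : q ∈ primes) : q.IsPrime := by
    rcases hq with rfl | hq
    exacts [Ideal.isPrime_bot, hq.1.1]
  have hheight (q) (hq : q ∈ primes) : q.height ≤ 1 := by
    rcases hq with rfl | hq
    · simp
    · exact Ideal.height_le_one_of_isPrincipal_of_mem_minimalPrimes _ q hq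
  have hsub : ¬ (P : Set T) ⊆ ⋃ q ∈ primes, (q : Set T) := fun hsub => by
    obtain ⟨q, hq, hPq⟩ := (Ideal.subset_union_prime_finite hfin (f := id) ⊥ ⊥
      fun q hq _ _ => hprime q hq).1 hsub
    exact hP.not_ge ((Ideal.height_mono hPq).trans (hheight q hq))
  obtain ⟨y, hyP, hy⟩ := Set.not_subset.1 hsub
  simp only [Set.mem_iUnion, not_exists] at hy
  have hy0 : y ≠ 0 := fun h => hy ⊥ (Set.mem_insert _ _) h
  obtain ⟨Q, hQ, hQP⟩ :=
    Ideal.exists_minimalPrimes_le ((Ideal.span_singleton_le_iff_mem P).2 hyP)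
  have hQprime : Q.IsPrime := hQ.1.1
  have hyQ : y ∈ Q := (Ideal.span_singleton_le_iff_mem _).1 hQ.1.2
  have hQ1 := Ideal.height_le_one_of_isPrincipal_of_mem_minimalPrimes _ Q hQ
  refine ⟨Q, hQP, hQprime, fun h => hy0 (by simpa [h] using hyQ), hQ1, fun hfQ => hy Q ?_ hyQ⟩
  refine Set.mem_insert_of_mem _ (Ideal.mem_minimalPrimes_of_height_le
    ((Ideal.span_singleton_le_iff_mem _).2 hfQ) (hQ1.trans ?_))
  exact Ideal.one_le_height_span_singleton_of_mem_nonZeroDivisors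
    (mem_nonZeroDivisors_of_ne_zero hf)

section Contraction

variable {k : Type u} {R T : Type v} [Field k] [CommRing R] [CommRing T] [Algebra k R]
  [Algebra k T] [Algebra R T] [IsScalarTower k R T] [Algebra.FiniteType k T]

theorem exists_ne_bot_trdeg_le_trdeg_quotient_under_add_one [IsDomain T] [FaithfulSMul R T]
    {P : Ideal T} [hPprime : P.IsPrime] (hP0 : P ≠ ⊥)
    (hP : Algebra.trdeg k (T ⧸ P) ≤ Algebra.trdeg k (R ⧸ P.under R)) :
    ∃ Q ≤ P, Q.IsPrime ∧ Q ≠ ⊥ ∧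
      Algebra.trdeg k R ≤ Algebra.trdeg k (R ⧸ Q.under R) + 1 := by
  have : IsDomain R := (FaithfulSMul.algebraMap_injective R T).isDomain (algebraMap R T)
  have hadd := trdeg_add_eq k R (A := T)
  obtain hP1 | hP1 := le_or_gt P.height 1
  · refine ⟨P, le_rfl, hPprime, hP0, ?_⟩
    calc Algebra.trdeg k R ≤ Algebra.trdeg k T := le_self_add.trans hadd.le
      _ ≤ Algebra.trdeg k (T ⧸ P) + 1 := trdeg_le_trdeg_quotient_add_one P hP1
      _ ≤ Algebra.trdeg k (R ⧸ P.under R) + 1 := by gcongr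
  have : IsNoetherianRing T := Algebra.FiniteType.isNoetherianRing k T
  have : Algebra.FiniteType R T := Algebra.FiniteType.of_restrictScalars_finiteType k R T
  obtain ⟨f, hf0, hf⟩ := exists_forall_trdeg_quotient_le (R := R) (T := T)
  obtain ⟨Q, hQP, hQprime, hQ0, hQ1, hfQ⟩ := exists_le_height_le_one_notMem hP1 hf0
  refine ⟨Q, hQP, hQprime, hQ0, ?_⟩
  have hRT : Algebra.trdeg R T < ℵ₀ := trdeg_lt_aleph0_of_finiteType
  refine (Cardinal.add_le_add_iff_of_lt_aleph0 hRT).1 ?_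
  calc Algebra.trdeg k R + Algebra.trdeg R T = Algebra.trdeg k T := hadd
    _ ≤ Algebra.trdeg k (T ⧸ Q) + 1 := trdeg_le_trdeg_quotient_add_one Q hQ1
    _ = Algebra.trdeg k (R ⧸ Q.under R) + Algebra.trdeg (R ⧸ Q.under R) (T ⧸ Q) + 1 := by
      rw [trdeg_add_eq]
    _ ≤ Algebra.trdeg k (R ⧸ Q.under R) + Algebra.trdeg R T + 1 := by
      gcongr
      exact hf Q hQprime hfQ
    _ = Algebra.trdeg k (R ⧸ Q.under R) + 1 + Algebra.trdeg R T := add_right_comm _ _ _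

theorem exists_gt_trdeg_quotient_under_le_add_one {P : Ideal T} [P.IsPrime]
    (hP : Algebra.trdeg k (T ⧸ P) ≤ Algebra.trdeg k (R ⧸ P.under R)) {Q₀ : Ideal T} [Q₀.IsPrime]
    (hQ₀P : Q₀ < P) :
    ∃ Q ≤ P, Q.IsPrime ∧ Q₀ < Q ∧
      Algebra.trdeg k (R ⧸ Q₀.under R) ≤ Algebra.trdeg k (R ⧸ Q.under R) + 1 := by
  let mT := Ideal.Quotient.mkₐ k Q₀
  let mR := Ideal.Quotient.mkₐ k (Q₀.under R)
  have hmT : Function.Surjective mT := Ideal.Quotient.mkₐ_surjective k Q₀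
  have hmR : Function.Surjective mR := Ideal.Quotient.mkₐ_surjective k (Q₀.under R)
  have hunder (J : Ideal (T ⧸ Q₀)) :
      (J.under (R ⧸ Q₀.under R)).comap mR = (J.comap mT).under R := rfl
  have hbot : (⊥ : Ideal (T ⧸ Q₀)).comap mT = Q₀ := Ideal.Quotient.mkₐ_ker k Q₀
  have hPmap : (P.map mT).comap mT = P := Ideal.comap_map_mk hQ₀P.le
  have : (P.map mT).IsPrime := Ideal.isPrime_map_quotientMk_of_isPrime hQ₀P.le
  have hP0 : P.map mT ≠ ⊥ := fun h => hQ₀P.ne' (by rw [← hPmap, h, hbot])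
  obtain ⟨Q, hQP, hQprime, hQ0, hQ⟩ := exists_ne_bot_trdeg_le_trdeg_quotient_under_add_one
    (k := k) (R := R ⧸ Q₀.under R) hP0 (by
      rwa [← trdeg_quotient_comap hmT, ← trdeg_quotient_comap hmR, hunder, hPmap])
  refine ⟨Q.comap mT, hPmap ▸ Ideal.comap_mono hQP, Ideal.comap_isPrime mT Q, ?_, ?_⟩
  · refine (hbot.ge.trans (Ideal.comap_mono bot_le)).lt_of_ne fun h => hQ0 ?_
    exact Ideal.comap_injective_of_surjective mT hmT (h.symm.trans hbot.symm)
  · rwa [← trdeg_quotient_comap hmR, hunder] at hQ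

theorem height_under_add_trdeg_quotient_under_le {P : Ideal T} [P.IsPrime]
    (hP : Algebra.trdeg k (T ⧸ P) ≤ Algebra.trdeg k (R ⧸ P.under R)) (Q₀ : Ideal T)
    (hQ₀ : Q₀.IsPrime) (hQ₀P : Q₀ ≤ P) :
    (Q₀.under R).height + toENat (Algebra.trdeg k (R ⧸ Q₀.under R)) ≤
      (P.under R).height + toENat (Algebra.trdeg k (R ⧸ P.under R)) := by
  have : IsNoetherianRing T := Algebra.FiniteType.isNoetherianRing k T
  induction Q₀ using WellFoundedGT.induction with
  | ind Q₀ ih =>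
  obtain rfl | hlt := hQ₀P.eq_or_lt
  · exact le_rfl
  obtain ⟨Q, hQP, hQprime, hQ₀Q, hQ⟩ := exists_gt_trdeg_quotient_under_le_add_one hP hlt
  refine le_trans ?_ (ih Q hQ₀Q hQprime hQP)
  have hle : Q₀.under R ≤ Q.under R := Ideal.comap_mono hQ₀Q.le
  obtain heq | hlt := hle.eq_or_lt
  · rw [heq]
  calc (Q₀.under R).height + toENat (Algebra.trdeg k (R ⧸ Q₀.under R))
      ≤ (Q₀.under R).height + (toENat (Algebra.trdeg k (R ⧸ Q.under R)) + 1) := by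
        gcongr
        simpa using OrderHomClass.mono toENat hQ
    _ = (Q₀.under R).height + 1 + toENat (Algebra.trdeg k (R ⧸ Q.under R)) := by ring
    _ ≤ (Q.under R).height + toENat (Algebra.trdeg k (R ⧸ Q.under R)) := by
        gcongr
        exact Ideal.height_add_one_le_of_lt_of_isPrime hlt

theorem height_under_add_trdeg_quotient_under [IsDomain T] [FaithfulSMul R T] (P : Ideal T)
    [P.IsPrime] :
    (P.under R).height + toENat (Algebra.trdeg k (R ⧸ P.under R)) = toENat (Algebra.trdeg k R) := by
  have : Algebra.FiniteType R T := Algebra.FiniteType.of_restrictScalars_finiteType k R T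
  refine (height_add_trdeg_quotient_le (trdeg_lt_aleph0_of_faithfulSMul (T := T)) _).antisymm ?_
  obtain ⟨P', hP', hPP', halg⟩ := exists_isPrime_isAlgebraic_quotient (R := R) P
  rw [← hPP']
  have htrdeg : Algebra.trdeg k (T ⧸ P') = Algebra.trdeg k (R ⧸ P'.under R) :=
    trdeg_eq_of_isAlgebraic
  calc toENat (Algebra.trdeg k R)
      = toENat (Algebra.trdeg k (R ⧸ (⊥ : Ideal T).under R)) := by
        rw [Ideal.under_bot, (AlgEquiv.quotientBot k R).trdeg_eq]
    _ ≤ ((⊥ : Ideal T).under R).height + toENat (Algebra.trdeg k (R ⧸ (⊥ : Ideal T).under R)) :=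
        le_add_self
    _ ≤ (P'.under R).height + toENat (Algebra.trdeg k (R ⧸ P'.under R)) :=
        height_under_add_trdeg_quotient_under_le htrdeg.le ⊥ Ideal.isPrime_bot bot_le

theorem trdeg_quotient_under_eq_zero (P : Ideal T) [P.IsMaximal] :
    Algebra.trdeg k (R ⧸ P.under R) = 0 := by
  let := Ideal.Quotient.field P
  have : Module.Finite k (T ⧸ P) := finite_of_finite_type_of_isJacobsonRing k (T ⧸ P)
  refine nonpos_iff_eq_zero.1 ?_
  rw [← trdeg_eq_zero (R := k) (A := T ⧸ P)]
  exact trdeg_le_of_injective (IsScalarTower.toAlgHom k (R ⧸ P.under R) (T ⧸ P))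
    (FaithfulSMul.algebraMap_injective _ _)

theorem ringKrullDim_eq_trdeg [IsDomain T] [FaithfulSMul R T] :
    ringKrullDim R = (toENat (Algebra.trdeg k R) : ℕ∞) := by
  refine le_antisymm ?_ ?_
  · refine (ringKrullDim_le_iff_height_le _).2 fun p _ => ?_
    exact_mod_cast le_self_add.trans
      (height_add_trdeg_quotient_le (trdeg_lt_aleph0_of_faithfulSMul (T := T)) p)
  · obtain ⟨P, hP⟩ := Ideal.exists_maximal T
    rw [← height_under_add_trdeg_quotient_under (R := R) P, trdeg_quotient_under_eq_zero, map_zero,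
      add_zero]
    exact Ideal.height_le_ringKrullDim_of_ne_top Ideal.IsPrime.ne_top'

end Contraction

theorem fractionFieldTrdeg_eq_trdeg (k S : Type*) [Field k] [CommRing S] [IsDomain S]
    [Algebra k S] : fractionFieldTrdeg k S = Algebra.trdeg k S := by
  have halgebra : fractionRingAlgebra k S = (inferInstance : Algebra k (FractionRing S)) :=
    Algebra.algebra_ext _ _ fun a => (IsScalarTower.algebraMap_apply k S (FractionRing S) a).symm
  have : Algebra.IsAlgebraic S (FractionRing S) := IsLocalization.isAlgebraic _ (nonZeroDivisors S)
  calc fractionFieldTrdeg k S = Algebra.trdeg k (FractionRing S) := by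
        rw [fractionFieldTrdeg, halgebra]
        rfl
    _ = Algebra.trdeg k S := trdeg_eq_of_isAlgebraic

/-- Let `k` be a field, `T` an affine domain over `k`, and `R` a `k`-subalgebra of `T`.
Then for every prime ideal `P` of `T`,
`dim R = ht(P ∩ R) + td(R/(P ∩ R))`, where the height of the prime `P ∩ R` is the Krull
dimension of the localization of `R` at it, and `td` denotes the transcendence degree
over `k` of the fraction field. -/
theorem ringKrullDim_eq_height_add_trdeg_quotient
    {k T : Type*} [Field k] [CommRing T] [IsDomain T] [Algebra k T]
    [Algebra.FiniteType k T] (R : Subalgebra k T)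
    (P : Ideal T) (hP : P.IsPrime) :
    haveI hp : (P.comap (algebraMap R T)).IsPrime := hP.comap (algebraMap R T)
    ringKrullDim R =
      ringKrullDim (Localization.AtPrime (P.comap (algebraMap R T))) +
        cardinalToKrullDim (fractionFieldTrdeg k (R ⧸ P.comap (algebraMap R T))) := by
  have : FaithfulSMul R T :=
    (faithfulSMul_iff_algebraMap_injective R T).2 Subtype.val_injective
  rw [fractionFieldTrdeg_eq_trdeg, cardinalToKrullDim, ringKrullDim_eq_trdeg (k := k) (T := T),
    IsLocalization.AtPrime.ringKrullDim_eq_height (P.under R),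
    ← height_under_add_trdeg_quotient_under P]
  rfl
end
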